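/- Fix prices p^1,…,p^T ∈ ℝ^K_{++} and a counterfactual price p̃ ∈ ℝ^K_{++}, and let A = {(d,ε) ∈ ℝ^{K×T}_+ × ℝ_+ : ε ≥ ε*({(d^t,p^t)}_{t=1}^T)}. Viewed as functions on A of the quantities d and the approximation error ε, the upper counterfactual bound x̄_k(d,p̃,ε) = sup{x̃_k : x̃ ∈ X(p̃, {(d^t,p^t)}_{t=1}^T, ε)} is concave in (d,ε) and continuous at every point of A where it is finite, and the lower bound x̲_k(d,p̃,ε) = inf{x̃_k : x̃ ∈ X(p̃, {(d^t,p^t)}_{t=1}^T, ε)} is convex and continuous in (d,ε) on A. -/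

import Mathlib

/-!
By Afriat's argument, ε-rationalizability of a dataset is the solvability in utility levels
`v : Fin T → ℝ` of the linear inequalities `v s - v t ≤ p t · (x s - x t) + ε`
(`epsRationalized_iff`). With prices fixed these are jointly homogeneous linear in the quantities,
the error and `v`, so by Fourier–Motzkin elimination (`IsPolyCone.exists_real`, `IsPolyCone.exists_fin`)
the set of `(d, ε, x̃ k)` with `x̃ ∈ X(p̃, d, ε)` is a polyhedral cone (`isPolyCone_graph`).

The region `A` is exactly where the fibres of this cone are nonempty: the infimum defining `ε*` is
attained (`mem_Aset_iff`), and a capped utility has a maximizer at the counterfactual price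
(`Xset_nonempty`). The maximum of the last coordinate over nonempty fibres of a polyhedral cone is
either always infinite or a finite minimum of linear functionals (`IsPolyCone.isGreatest`). Such a
minimum is concave and continuous, which gives the upper bound; reflecting the last coordinate
gives the lower bound as a finite maximum of linear functionals.
-/

open Finset

noncomputable section

/-- Dot product on `ℝ^K`. -/
def dot {K : ℕ} (a b : Fin K → ℝ) : ℝ := ∑ i, a i * b i

/-- `y ∈ ℝ^K_+`. -/
def Nonneg {K : ℕ} (y : Fin K → ℝ) : Prop := ∀ i, 0 ≤ y i

/-- The utility function `u` ε-rationalizes the dataset `{(x^t, p^t)}_{t=1}^T`. -/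
def Rationalizes {K T : ℕ} (x p : Fin T → Fin K → ℝ) (ε : ℝ)
    (u : (Fin K → ℝ) → ℝ) : Prop :=
  ∀ t : Fin T, ∀ y : Fin K → ℝ, Nonneg y →
    u y - dot (p t) y - ε ≤ u (x t) - dot (p t) (x t)

/-- The dataset `{(x^t, p^t)}_{t=1}^T` is ε-rationalized by quasilinear utility. -/
def EpsRationalized {K T : ℕ} (x p : Fin T → Fin K → ℝ) (ε : ℝ) : Prop :=
  ∃ u : (Fin K → ℝ) → ℝ, Rationalizes x p ε u

/-- `ε'` is the smallest `ε ≥ 0` such that the dataset is ε-rationalized. -/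
def IsEpsStar {K T : ℕ} (x p : Fin T → Fin K → ℝ) (ε' : ℝ) : Prop :=
  0 ≤ ε' ∧ EpsRationalized x p ε' ∧
    ∀ ε : ℝ, 0 ≤ ε → EpsRationalized x p ε → ε' ≤ ε

/-- The counterfactual quantity set `X(p̃,D,ε)`. -/
def Xset {K T : ℕ} (x p : Fin T → Fin K → ℝ) (pt : Fin K → ℝ) (ε : ℝ) :
    Set (Fin K → ℝ) :=
  {xt | Nonneg xt ∧ EpsRationalized (Fin.cons xt x) (Fin.cons pt p) ε}

/-- With the prices `p` fixed, `ε*` as a function of the quantities `d`. -/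
def epsStarF {K T : ℕ} (p : Fin T → Fin K → ℝ) (d : Fin T → Fin K → ℝ) : ℝ :=
  sInf {ε : ℝ | 0 ≤ ε ∧ EpsRationalized d p ε}

/-- The region `A = {(d,ε) : d ∈ ℝ^{K×T}_+, ε ≥ 0, ε ≥ ε*(d)}`. -/
def Aset {K T : ℕ} (p : Fin T → Fin K → ℝ) : Set ((Fin T → Fin K → ℝ) × ℝ) :=
  {q | (∀ t, Nonneg (q.1 t)) ∧ 0 ≤ q.2 ∧ epsStarF p q.1 ≤ q.2}

/-- The upper counterfactual bound `x̄_k(d,p̃,ε)` as an extended-real function of `(d,ε)`. -/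
def ubkF {K T : ℕ} (p : Fin T → Fin K → ℝ) (pt : Fin K → ℝ) (k : Fin K)
    (q : (Fin T → Fin K → ℝ) × ℝ) : EReal :=
  sSup ((fun xt : Fin K → ℝ => ((xt k : ℝ) : EReal)) '' Xset q.1 p pt q.2)

/-- The lower counterfactual bound `x̲_k(d,p̃,ε)` as a real function of `(d,ε)`. -/
def lbkF {K T : ℕ} (p : Fin T → Fin K → ℝ) (pt : Fin K → ℝ) (k : Fin K)
    (q : (Fin T → Fin K → ℝ) × ℝ) : ℝ :=
  sInf ((fun xt : Fin K → ℝ => xt k) '' Xset q.1 p pt q.2)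

/-! ### Polyhedral cones and Fourier–Motzkin elimination -/

/-- `P` describes a polyhedral cone: the solution set of finitely many homogeneous linear
inequalities `f x ≤ 0`. -/
def IsPolyCone {E : Type*} [AddCommGroup E] [Module ℝ E] (P : E → Prop) : Prop :=
  ∃ F : Set (E →ₗ[ℝ] ℝ), F.Finite ∧ ∀ x, P x ↔ ∀ f ∈ F, f x ≤ 0

section Poly

variable {E E' : Type*} [AddCommGroup E] [Module ℝ E] [AddCommGroup E'] [Module ℝ E']

lemma IsPolyCone.congr {P Q : E → Prop} (h : IsPolyCone P) (hPQ : ∀ x, P x ↔ Q x) : IsPolyCone Q := by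
  obtain ⟨F, hF, h⟩ := h
  exact ⟨F, hF, fun x => by rw [← hPQ, h]⟩

lemma isPolyCone_le (f : E →ₗ[ℝ] ℝ) : IsPolyCone (fun x => f x ≤ 0) :=
  ⟨{f}, Set.finite_singleton f, fun x => by simp⟩

lemma isPolyCone_forall {ι : Type*} [Finite ι] {P : ι → E → Prop} (h : ∀ i, IsPolyCone (P i)) :
    IsPolyCone (fun x => ∀ i, P i x) := by
  choose F hF h using h
  refine ⟨⋃ i, F i, Set.finite_iUnion hF, fun x => ?_⟩
  simp only [h, Set.mem_iUnion]
  exact ⟨fun H f ⟨i, hi⟩ => H i f hi, fun H i f hi => H f ⟨i, hi⟩⟩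

lemma IsPolyCone.and {P Q : E → Prop} (hP : IsPolyCone P) (hQ : IsPolyCone Q) :
    IsPolyCone (fun x => P x ∧ Q x) := by
  obtain ⟨F, hF, h⟩ := hP
  obtain ⟨G, hG, h'⟩ := hQ
  refine ⟨F ∪ G, hF.union hG, fun x => ?_⟩
  simp only [h, h', Set.mem_union]
  exact ⟨fun H f hf => hf.elim (H.1 f) (H.2 f),
    fun H => ⟨fun f hf => H f (Or.inl hf), fun f hf => H f (Or.inr hf)⟩⟩

lemma IsPolyCone.comp {P : E → Prop} (hP : IsPolyCone P) (L : E' →ₗ[ℝ] E) :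
    IsPolyCone (fun x => P (L x)) := by
  obtain ⟨F, hF, h⟩ := hP
  refine ⟨(fun f => f ∘ₗ L) '' F, hF.image _, fun x => ?_⟩
  simp [h]

lemma IsPolyCone.convex {P : E → Prop} (hP : IsPolyCone P) {x y : E} (hx : P x) (hy : P y)
    {a b : ℝ} (ha : 0 ≤ a) (hb : 0 ≤ b) : P (a • x + b • y) := by
  obtain ⟨F, hF, h⟩ := hP
  rw [h] at hx hy ⊢
  intro f hf
  have h1 := mul_nonneg ha (neg_nonneg.2 (hx f hf))
  have h2 := mul_nonneg hb (neg_nonneg.2 (hy f hf))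
  simp only [map_add, map_smul, smul_eq_mul]
  linarith

lemma apply_prod (f : E × ℝ →ₗ[ℝ] ℝ) (q : E) (z : ℝ) :
    f (q, z) = f (q, 0) + f (0, 1) * z := by
  have : (q, z) = (q, (0 : ℝ)) + z • ((0 : E), (1 : ℝ)) := by simp
  rw [this, map_add, map_smul, smul_eq_mul, mul_comm]

/-- A nonstrict separation of two finite sets of reals, either of which may be empty. -/
lemma exists_between_finite {s t : Set ℝ} (hs : s.Finite) (ht : t.Finite)
    (h : ∀ x ∈ s, ∀ y ∈ t, x ≤ y) : ∃ z, (∀ x ∈ s, x ≤ z) ∧ ∀ y ∈ t, z ≤ y := by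
  rcases s.eq_empty_or_nonempty with rfl | hne
  · obtain ⟨z, hz⟩ := ht.bddBelow
    exact ⟨z, by simp, fun y hy => hz hy⟩
  · exact ⟨sSup s, fun x hx => le_csSup hs.bddAbove hx,
      fun y hy => csSup_le hne fun x hx => h x hx y hy⟩

/-- One step of Fourier–Motzkin elimination. A system of inequalities in `(q, z)` is solvable in
`z` iff `q` satisfies the inequalities not involving `z` and every combination of an inequality
bounding `z` above with one bounding `z` below, weighted so that `z` cancels. -/
lemma IsPolyCone.exists_real {P : E × ℝ → Prop} (hP : IsPolyCone P) :
    IsPolyCone (fun q => ∃ z, P (q, z)) := by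
  obtain ⟨F, hF, h⟩ := hP
  let r : (E × ℝ →ₗ[ℝ] ℝ) → (E →ₗ[ℝ] ℝ) := fun f => f ∘ₗ LinearMap.inl ℝ E ℝ
  have hr : ∀ f q, r f q = f (q, 0) := fun f q => rfl
  let c : (E × ℝ →ₗ[ℝ] ℝ) → ℝ := fun f => f (0, 1)
  have hc : ∀ f q z, f (q, z) = r f q + c f * z := fun f q z => apply_prod f q z
  let F0 := {f ∈ F | c f = 0}
  let Fp := {f ∈ F | 0 < c f}
  let Fm := {f ∈ F | c f < 0}
  refine ⟨r '' F0 ∪ Set.image2 (fun f g => (-c g) • r f + c f • r g) Fp Fm,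
    ((hF.subset (Set.sep_subset _ _)).image _).union
      (Set.Finite.image2 _ (hF.subset (Set.sep_subset _ _)) (hF.subset (Set.sep_subset _ _))),
    fun q => ⟨?_, ?_⟩⟩
  · rintro ⟨z, hz⟩ f hf
    rw [h] at hz
    rcases hf with ⟨f, ⟨hf, hf0⟩, rfl⟩ | ⟨f, ⟨hf, hfp⟩, g, ⟨hg, hgm⟩, rfl⟩
    · have := hz f hf
      rw [hc, hf0] at this
      linarith
    · have h1 := hz f hf
      have h2 := hz g hg
      rw [hc] at h1 h2
      simp only [LinearMap.add_apply, LinearMap.smul_apply, smul_eq_mul]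
      nlinarith [mul_le_mul_of_nonneg_left h1 (neg_nonneg.2 hgm.le),
        mul_le_mul_of_nonneg_left h2 hfp.le]
  · intro H
    obtain ⟨z, hz1, hz2⟩ := exists_between_finite
      (s := (fun g => -(r g q) / c g) '' Fm) (t := (fun f => -(r f q) / c f) '' Fp)
      ((hF.subset (Set.sep_subset _ _)).image _) ((hF.subset (Set.sep_subset _ _)).image _) (by
        rintro _ ⟨g, hg, rfl⟩ _ ⟨f, hf, rfl⟩
        have := H _ (Or.inr ⟨f, hf, g, hg, rfl⟩)
        simp only [LinearMap.add_apply, LinearMap.smul_apply, smul_eq_mul] at this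
        have hg' : c g < 0 := hg.2
        have hf' : 0 < c f := hf.2
        simp only
        rw [div_le_iff_of_neg hg', div_mul_eq_mul_div, div_le_iff₀ hf']
        linarith)
    refine ⟨z, (h _).2 fun f hf => ?_⟩
    rw [hc]
    rcases lt_trichotomy (c f) 0 with h0 | h0 | h0
    · have := hz1 _ ⟨f, ⟨hf, h0⟩, rfl⟩
      rw [div_le_iff_of_neg h0] at this
      linarith
    · have := H _ (Or.inl ⟨f, ⟨hf, h0⟩, rfl⟩)
      rw [h0]
      linarith
    · have := hz2 _ ⟨f, ⟨hf, h0⟩, rfl⟩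
      rw [le_div_iff₀ h0] at this
      linarith

end Poly

lemma IsPolyCone.exists_fin {n : ℕ} : ∀ {E : Type*} [AddCommGroup E] [Module ℝ E]
    {P : E × (Fin n → ℝ) → Prop}, IsPolyCone P → IsPolyCone (fun q => ∃ y, P (q, y)) := by
  induction n with
  | zero =>
    intro E _ _ P hP
    refine (hP.comp (LinearMap.inl ℝ E (Fin 0 → ℝ))).congr fun q => ?_
    exact ⟨fun h => ⟨0, h⟩, fun ⟨y, h⟩ => by rwa [Subsingleton.elim y 0] at h⟩
  | succ n ih =>
    intro E _ _ P hP
    let L : (E × ℝ) × (Fin n → ℝ) →ₗ[ℝ] E × (Fin (n + 1) → ℝ) :=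
      { toFun := fun w => (w.1.1, Fin.cons w.1.2 w.2)
        map_add' := fun a b => by
          refine Prod.ext rfl (funext fun i => ?_)
          refine Fin.cases ?_ (fun j => ?_) i <;> simp
        map_smul' := fun a b => by
          refine Prod.ext rfl (funext fun i => ?_)
          refine Fin.cases ?_ (fun j => ?_) i <;> simp }
    refine (ih (hP.comp L)).exists_real.congr fun q => ?_
    refine ⟨fun ⟨z, y, h⟩ => ⟨Fin.cons z y, h⟩, fun ⟨y, h⟩ => ⟨y 0, Fin.tail y, ?_⟩⟩
    change P (q, Fin.cons (y 0) (Fin.tail y))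
    rwa [Fin.cons_self_tail]

/-- The largest last coordinate over the fibres of a polyhedral cone: either every nonempty fibre
is an up-set, or the fibre maximum is a fixed finite minimum of linear functionals. -/
lemma IsPolyCone.isGreatest {E : Type*} [AddCommGroup E] [Module ℝ E] {P : E × ℝ → Prop}
    (hP : IsPolyCone P) :
    (∀ q z z', P (q, z) → z ≤ z' → P (q, z')) ∨
    ∃ (F : Finset (E →ₗ[ℝ] ℝ)) (hF : F.Nonempty), ∀ q, (∃ z, P (q, z)) →
      IsGreatest {z | P (q, z)} (F.inf' hF fun f => f q) := by
  classical
  obtain ⟨F, hF, h⟩ := hP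
  by_cases hne : ∃ f ∈ F, 0 < f (0, 1)
  · right
    -- An inequality `f` with positive slope in `z` says `z ≤ -f (q, 0) / f (0, 1)`.
    let g : (E × ℝ →ₗ[ℝ] ℝ) → (E →ₗ[ℝ] ℝ) :=
      fun f => (-(f (0, 1))⁻¹) • (f ∘ₗ LinearMap.inl ℝ E ℝ)
    have hg : ∀ f q, 0 < f (0, 1) → f (0, 1) * g f q = - f (q, 0) := by
      intro f q hf
      simp only [g, LinearMap.smul_apply, LinearMap.comp_apply, LinearMap.inl_apply, smul_eq_mul]
      field_simp
    have hfin : {f ∈ F | 0 < f (0, 1)}.Finite := hF.subset (Set.sep_subset _ _)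
    obtain ⟨f0, hf0, hf0'⟩ := hne
    refine ⟨hfin.toFinset.image g, ⟨g f0, Finset.mem_image_of_mem _ (by simp [hf0, hf0'])⟩,
      fun q ⟨z, hz⟩ => ?_⟩
    have hub : ∀ z, P (q, z) → z ≤ (hfin.toFinset.image g).inf'
        ⟨g f0, Finset.mem_image_of_mem _ (by simp [hf0, hf0'])⟩ (fun f => f q) := by
      intro z hz
      refine Finset.le_inf' _ _ fun f' hf' => ?_
      obtain ⟨f, hf, rfl⟩ := Finset.mem_image.1 hf'
      obtain ⟨hf, hpos⟩ := hfin.mem_toFinset.1 hf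
      have h1 := (h _).1 hz f hf
      rw [apply_prod] at h1
      refine le_of_mul_le_mul_left ?_ hpos
      rw [hg f q hpos]
      linarith
    refine ⟨(h _).2 fun f hf => ?_, fun z hz => hub z hz⟩
    rw [apply_prod]
    rcases le_or_gt (f (0, 1)) 0 with h0 | h0
    · have h1 := (h _).1 hz f hf
      rw [apply_prod] at h1
      nlinarith [mul_le_mul_of_nonpos_left (hub z hz) h0]
    · have h1 := Finset.inf'_le (f := fun f : E →ₗ[ℝ] ℝ => f q)
        (Finset.mem_image_of_mem g (hfin.mem_toFinset.2 ⟨hf, h0⟩))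
      have h2 := mul_le_mul_of_nonneg_left h1 h0.le
      rw [hg f q h0] at h2
      linarith
  · left
    push Not at hne
    intro q z z' hz hzz
    rw [h] at hz ⊢
    intro f hf
    have h1 := hz f hf
    rw [apply_prod] at h1 ⊢
    nlinarith [mul_le_mul_of_nonpos_left hzz (hne f hf)]

lemma IsPolyCone.isClosed {E : Type*} [NormedAddCommGroup E] [NormedSpace ℝ E]
    [FiniteDimensional ℝ E] {P : E → Prop} (hP : IsPolyCone P) : IsClosed {x | P x} := by
  obtain ⟨F, hF, h⟩ := hP
  simp only [h, Set.ofPred_forall]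
  exact isClosed_iInter fun f => isClosed_iInter fun _ =>
    isClosed_le f.continuous_of_finiteDimensional continuous_const

lemma continuous_inf'_linear {E : Type*} [NormedAddCommGroup E] [NormedSpace ℝ E]
    [FiniteDimensional ℝ E] (F : Finset (E →ₗ[ℝ] ℝ)) (hF : F.Nonempty) :
    Continuous (fun q => F.inf' hF fun f => f q) :=
  Continuous.finset_inf'_apply hF fun f _ => f.continuous_of_finiteDimensional

lemma concave_inf'_linear {E : Type*} [AddCommGroup E] [Module ℝ E]
    (F : Finset (E →ₗ[ℝ] ℝ)) (hF : F.Nonempty) (x y : E) {a b : ℝ} (ha : 0 ≤ a) (hb : 0 ≤ b) :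
    a * (F.inf' hF fun f => f x) + b * (F.inf' hF fun f => f y) ≤
      F.inf' hF fun f => f (a • x + b • y) := by
  refine Finset.le_inf' _ _ fun f hf => ?_
  rw [map_add, map_smul, map_smul, smul_eq_mul, smul_eq_mul]
  exact add_le_add
    (mul_le_mul_of_nonneg_left (Finset.inf'_le (f := fun f : E →ₗ[ℝ] ℝ => f x) hf) ha)
    (mul_le_mul_of_nonneg_left (Finset.inf'_le (f := fun f : E →ₗ[ℝ] ℝ => f y) hf) hb)

/-! ### Afriat inequalities -/

/-- Rationalizability amounts to a finite system of linear inequalities in the data and the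
utility levels `v t = u (x t)`. Given `v`, a utility is the lower envelope of the affine functions
`y ↦ v t + p t · (y - x t) + ε`; its value at `x t` is at least `v t`, which is all that is
needed, so repeated bundles cause no difficulty. -/
lemma epsRationalized_iff {K T : ℕ} {x p : Fin T → Fin K → ℝ} {ε : ℝ}
    (hx : ∀ t, Nonneg (x t)) :
    EpsRationalized x p ε ↔
      ∃ v : Fin T → ℝ, ∀ s t, v s - v t ≤ dot (p t) (x s) - dot (p t) (x t) + ε := by
  constructor
  · rintro ⟨u, hu⟩
    refine ⟨fun t => u (x t), fun s t => ?_⟩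
    have := hu t (x s) (hx s)
    linarith
  · rintro ⟨v, hv⟩
    refine ⟨fun y => ⨅ t, (v t + dot (p t) y - dot (p t) (x t) + ε), fun t y _ => ?_⟩
    have : Nonempty (Fin T) := ⟨t⟩
    have h1 : (⨅ s, (v s + dot (p s) y - dot (p s) (x s) + ε)) ≤
        v t + dot (p t) y - dot (p t) (x t) + ε :=
      ciInf_le (Set.finite_range _).bddBelow t
    have h2 : v t ≤ ⨅ s, (v s + dot (p s) (x t) - dot (p s) (x s) + ε) :=
      le_ciInf fun s => by linarith [hv t s]
    linarith

lemma EpsRationalized.mono {K T : ℕ} {x p : Fin T → Fin K → ℝ} {ε ε' : ℝ}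
    (h : EpsRationalized x p ε) (hle : ε ≤ ε') : EpsRationalized x p ε' := by
  obtain ⟨u, hu⟩ := h
  exact ⟨u, fun t y hy => by linarith [hu t y hy]⟩

lemma continuous_dot {K : ℕ} (a : Fin K → ℝ) : Continuous (dot a) := by
  unfold dot
  fun_prop

/-- The linear functional `y ↦ a · y`. -/
def dotL {K : ℕ} (a : Fin K → ℝ) : (Fin K → ℝ) →ₗ[ℝ] ℝ where
  toFun := dot a
  map_add' x y := by simp [dot, mul_add, Finset.sum_add_distrib]
  map_smul' c x := by
    simp only [dot, Pi.smul_apply, smul_eq_mul, RingHom.id_apply, Finset.mul_sum]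
    exact Finset.sum_congr rfl fun i _ => by ring

/-- A rationalizable dataset has a rationalizable demand at every price. The lower envelope
utility, capped at a level above all `v t`, still rationalizes the data, and net of linear
expenditure at strictly positive prices it attains its maximum on the orthant. -/
lemma Xset_nonempty {K T : ℕ} {x p : Fin T → Fin K → ℝ} {pt : Fin K → ℝ} {ε : ℝ}
    (hpt : ∀ i, 0 < pt i) (hx : ∀ t, Nonneg (x t)) (hε : 0 ≤ ε)
    (h : EpsRationalized x p ε) : (Xset x p pt ε).Nonempty := by
  obtain ⟨v, hv⟩ := (epsRationalized_iff hx).1 h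
  obtain ⟨M, hM⟩ := (Set.finite_range v).bddAbove
  have hM : ∀ t, v t ≤ M := fun t => hM ⟨t, rfl⟩
  let g : Option (Fin T) → (Fin K → ℝ) → ℝ := fun o y =>
    o.elim M fun t => v t + dot (p t) y - dot (p t) (x t) + ε
  let f : (Fin K → ℝ) → ℝ := fun y => Finset.univ.inf' ⟨none, Finset.mem_univ _⟩ fun o => g o y
  have hf : ∀ o y, f y ≤ g o y := fun o y => Finset.inf'_le _ (Finset.mem_univ o)
  have hfc : Continuous f := by
    refine Continuous.finset_inf'_apply _ fun o _ => ?_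
    rcases o with _ | t
    · exact continuous_const
    · exact ((continuous_const.add (continuous_dot _)).sub continuous_const).add continuous_const
  have hfx : ∀ t, v t ≤ f (x t) := by
    intro t
    refine Finset.le_inf' _ _ fun o _ => ?_
    rcases o with _ | s
    · exact hM t
    · change v t ≤ v s + dot (p s) (x t) - dot (p s) (x s) + ε
      linarith [hv t s]
  -- Bundles outside the box `[0, C / pt]` cost more than `C`, hence do worse than `0`.
  let C : ℝ := M - f 0
  have hC : 0 ≤ C := sub_nonneg.2 (hf none 0)
  have h0 : (0 : Fin K → ℝ) ∈ Set.Icc (0 : Fin K → ℝ) (fun i => C / pt i) :=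
    ⟨le_rfl, fun i => div_nonneg hC (hpt i).le⟩
  obtain ⟨xt, hxt, hmax⟩ := (isCompact_Icc (a := (0 : Fin K → ℝ))
    (b := fun i => C / pt i)).exists_isMaxOn ⟨0, h0⟩
    (f := fun y => f y - dot pt y) (hfc.sub (continuous_dot _)).continuousOn
  have hmax' : ∀ y, Nonneg y → f y - dot pt y ≤ f xt - dot pt xt := by
    intro y hy
    by_cases hyC : y ∈ Set.Icc (0 : Fin K → ℝ) (fun i => C / pt i)
    · exact hmax hyC
    · have : ∃ i, C / pt i < y i := by
        by_contra hcon
        push Not at hcon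
        exact hyC ⟨hy, hcon⟩
      obtain ⟨i, hi⟩ := this
      rw [div_lt_iff₀ (hpt i)] at hi
      have h1 : pt i * y i ≤ dot pt y :=
        Finset.single_le_sum (f := fun i => pt i * y i)
          (fun j _ => mul_nonneg (hpt j).le (hy j)) (Finset.mem_univ i)
      have h2 : f 0 - dot pt 0 ≤ f xt - dot pt xt := hmax h0
      have h3 : dot pt (0 : Fin K → ℝ) = 0 := by simp [dot]
      have h4 : f y ≤ M := hf none y
      have h5 : C = M - f 0 := rfl
      linarith
  refine ⟨xt, hxt.1, f, fun t => ?_⟩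
  refine Fin.cases (fun y hy => ?_) (fun t y hy => ?_) t
  · simp only [Fin.cons_zero]
    linarith [hmax' y hy]
  · simp only [Fin.cons_succ]
    have h1 : f y ≤ v t + dot (p t) y - dot (p t) (x t) + ε := hf (some t) y
    linarith [hfx t]

/-! ### Polyhedrality of the counterfactual graph -/

/-- Data and error `q` whose quantities are nonnegative and `q.2`-rationalized. -/
def DataOK {K T : ℕ} (p : Fin T → Fin K → ℝ) (q : (Fin T → Fin K → ℝ) × ℝ) : Prop :=
  (∀ t, Nonneg (q.1 t)) ∧ 0 ≤ q.2 ∧ EpsRationalized q.1 p q.2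

/-- The graph of the set of `k`-th coordinates of counterfactual demands. -/
def DemandGraph {K T : ℕ} (p : Fin T → Fin K → ℝ) (pt : Fin K → ℝ) (k : Fin K)
    (w : ((Fin T → Fin K → ℝ) × ℝ) × ℝ) : Prop :=
  (∀ t, Nonneg (w.1.1 t)) ∧ 0 ≤ w.1.2 ∧ ∃ xt ∈ Xset w.1.1 p pt w.1.2, xt k = w.2

lemma isPolyCone_dataOK {K T : ℕ} (p : Fin T → Fin K → ℝ) : IsPolyCone (DataOK p) := by
  -- `X t` extracts the `t`-th bundle and `V t` the `t`-th utility level.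
  let Q := ((Fin T → Fin K → ℝ) × ℝ) × (Fin T → ℝ)
  let X : Fin T → Q →ₗ[ℝ] (Fin K → ℝ) := fun t =>
    LinearMap.proj t ∘ₗ LinearMap.fst ℝ _ _ ∘ₗ LinearMap.fst ℝ _ _
  let e : Q →ₗ[ℝ] ℝ := LinearMap.snd ℝ _ _ ∘ₗ LinearMap.fst ℝ _ _
  let V : Fin T → Q →ₗ[ℝ] ℝ := fun t => LinearMap.proj t ∘ₗ LinearMap.snd ℝ _ _
  have h1 : IsPolyCone (fun w : Q => ∀ t i, (-(LinearMap.proj i ∘ₗ X t)) w ≤ 0) :=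
    isPolyCone_forall fun t => isPolyCone_forall fun i => isPolyCone_le _
  have h2 : IsPolyCone (fun w : Q => ∀ s t,
      (V s - V t - (dotL (p t) ∘ₗ X s - dotL (p t) ∘ₗ X t + e)) w ≤ 0) :=
    isPolyCone_forall fun s => isPolyCone_forall fun t => isPolyCone_le _
  refine (h1.and ((isPolyCone_le (-e)).and h2)).exists_fin.congr fun q => ?_
  have hX : ∀ t v, X t (q, v) = q.1 t := fun _ _ => rfl
  have he : ∀ v, e (q, v) = q.2 := fun _ => rfl
  have hV : ∀ t v, V t (q, v) = v t := fun _ _ => rfl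
  have hd : ∀ a y, dotL a y = dot a (y : Fin K → ℝ) := fun _ _ => rfl
  simp only [LinearMap.neg_apply, LinearMap.sub_apply, LinearMap.add_apply, LinearMap.comp_apply,
    LinearMap.proj_apply, hX, he, hV, hd, neg_nonpos, sub_nonpos]
  rw [exists_and_left, exists_and_left]
  refine and_congr_right fun hn => and_congr_right fun _ => ?_
  exact (epsRationalized_iff (p := p) hn).symm

lemma isPolyCone_graph {K T : ℕ} (p : Fin T → Fin K → ℝ) (pt : Fin K → ℝ) (k : Fin K) :
    IsPolyCone (DemandGraph p pt k) := by
  -- The counterfactual observation is prepended to the data, and the cone of rationalizable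
  -- augmented datasets is projected to `(q, xt k)`.
  let L : (((Fin T → Fin K → ℝ) × ℝ) × ℝ) × (Fin K → ℝ) →ₗ[ℝ]
      (Fin (T + 1) → Fin K → ℝ) × ℝ :=
    { toFun := fun w => (Fin.cons w.2 w.1.1.1, w.1.1.2)
      map_add' := fun a b => by
        refine Prod.ext (funext fun i => ?_) rfl
        refine Fin.cases ?_ (fun j => ?_) i <;> simp
      map_smul' := fun a b => by
        refine Prod.ext (funext fun i => ?_) rfl
        refine Fin.cases ?_ (fun j => ?_) i <;> simp }
  let D : (((Fin T → Fin K → ℝ) × ℝ) × ℝ) × (Fin K → ℝ) →ₗ[ℝ] ℝ :=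
    (LinearMap.proj k : (Fin K → ℝ) →ₗ[ℝ] ℝ) ∘ₗ LinearMap.snd ℝ _ _ -
      LinearMap.snd ℝ _ _ ∘ₗ LinearMap.fst ℝ _ _
  refine (((isPolyCone_dataOK (Fin.cons pt p)).comp L).and
    ((isPolyCone_le D).and (isPolyCone_le (-D)))).exists_fin.congr fun w => ?_
  have hD : ∀ y, D (w, y) = y k - w.2 := fun _ => rfl
  have hL : ∀ y, L (w, y) = (Fin.cons y w.1.1, w.1.2) := fun _ => rfl
  simp only [LinearMap.neg_apply, hD, hL, DataOK, DemandGraph, Xset, Set.mem_ofPred_eq]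
  constructor
  · rintro ⟨y, ⟨h1, h2, h3⟩, h4, h5⟩
    exact ⟨fun t => h1 t.succ, h2, y, ⟨h1 0, h3⟩, by linarith⟩
  · rintro ⟨h1, h2, y, ⟨h3, h4⟩, h5⟩
    exact ⟨y, ⟨Fin.cases h3 h1, h2, h4⟩, by linarith, by linarith⟩

/-- On nonnegative data the infimum defining `ε*` is attained, since the rationalizing errors form
a nonempty closed set. -/
lemma mem_Aset_iff {K T : ℕ} (p : Fin T → Fin K → ℝ) (q : (Fin T → Fin K → ℝ) × ℝ) :
    q ∈ Aset p ↔ DataOK p q := by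
  constructor
  · rintro ⟨h1, h2, h3⟩
    refine ⟨h1, h2, ?_⟩
    let S : Set ℝ := {ε : ℝ | 0 ≤ ε ∧ EpsRationalized q.1 p ε}
    have hcl : IsClosed S := by
      have : S = (fun ε : ℝ => (q.1, ε)) ⁻¹' {w | DataOK p w} := by
        ext ε
        exact ⟨fun h => ⟨h1, h⟩, fun h => h.2⟩
      rw [this]
      exact (isPolyCone_dataOK p).isClosed.preimage (by fun_prop)
    have hne : S.Nonempty := by
      obtain ⟨M, hM⟩ := (Set.finite_range fun st : Fin T × Fin T =>
        dot (p st.2) (q.1 st.2) - dot (p st.2) (q.1 st.1)).bddAbove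
      refine ⟨max M 0, le_max_right _ _, (epsRationalized_iff h1).2 ⟨0, fun s t => ?_⟩⟩
      have := hM ⟨(s, t), rfl⟩
      have h4 := le_max_left M 0
      simp only [Pi.zero_apply] at this ⊢
      linarith
    have := hcl.csInf_mem hne ⟨0, fun ε h => h.1⟩
    exact this.2.mono h3
  · rintro ⟨h1, h2, h3⟩
    exact ⟨h1, h2, csInf_le ⟨0, fun ε h => h.1⟩ ⟨h2, h3⟩⟩

lemma exists_graph {K T : ℕ} {p : Fin T → Fin K → ℝ} {pt : Fin K → ℝ} (hpt : ∀ i, 0 < pt i)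
    (k : Fin K) {q : (Fin T → Fin K → ℝ) × ℝ} (hq : q ∈ Aset p) :
    ∃ z, DemandGraph p pt k (q, z) := by
  obtain ⟨h1, h2, h3⟩ := (mem_Aset_iff p q).1 hq
  obtain ⟨xt, hxt⟩ := Xset_nonempty hpt h1 h2 h3
  exact ⟨xt k, h1, h2, xt, hxt, rfl⟩

lemma graph_iff {K T : ℕ} {p : Fin T → Fin K → ℝ} {pt : Fin K → ℝ} {k : Fin K}
    {q : (Fin T → Fin K → ℝ) × ℝ} (hq : q ∈ Aset p) (z : ℝ) :
    DemandGraph p pt k (q, z) ↔ ∃ xt ∈ Xset q.1 p pt q.2, xt k = z :=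
  ⟨fun h => h.2.2, fun h => ⟨hq.1, hq.2.1, h⟩⟩

lemma convex_Aset {K T : ℕ} (p : Fin T → Fin K → ℝ) : Convex ℝ (Aset p) := by
  intro x hx y hy a b ha hb _
  rw [mem_Aset_iff] at hx hy ⊢
  exact (isPolyCone_dataOK p).convex hx hy ha hb

/-- The upper bound is identically `⊤` on `A`, or is a minimum of linear functionals. -/
lemma ubkF_cases {K T : ℕ} (p : Fin T → Fin K → ℝ) {pt : Fin K → ℝ} (hpt : ∀ i, 0 < pt i)
    (k : Fin K) :
    (∀ q ∈ Aset p, ubkF p pt k q = ⊤) ∨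
    ∃ (F : Finset ((Fin T → Fin K → ℝ) × ℝ →ₗ[ℝ] ℝ)) (hF : F.Nonempty),
      ∀ q ∈ Aset p, ubkF p pt k q = ((F.inf' hF fun f => f q : ℝ) : EReal) := by
  rcases (isPolyCone_graph p pt k).isGreatest with h | ⟨F, hF, h⟩
  · left
    intro q hq
    obtain ⟨z, hz⟩ := exists_graph hpt k hq
    rw [EReal.eq_top_iff_forall_lt]
    intro y
    obtain ⟨xt, hxt, hk⟩ := (graph_iff hq _).1 (h q z (max z (y + 1)) hz (le_max_left _ _))
    refine lt_of_lt_of_le ?_ (le_sSup ⟨xt, hxt, rfl⟩)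
    have := le_max_right z (y + 1)
    simp only [EReal.coe_lt_coe_iff, hk]
    linarith
  · right
    refine ⟨F, hF, fun q hq => ?_⟩
    obtain ⟨hmem, hub⟩ := h q (exists_graph hpt k hq)
    refine IsGreatest.csSup_eq ⟨?_, ?_⟩
    · obtain ⟨xt, hxt, hk⟩ := (graph_iff hq _).1 hmem
      exact ⟨xt, hxt, by simp only [hk]⟩
    · rintro _ ⟨xt, hxt, rfl⟩
      exact EReal.coe_le_coe_iff.2 (hub ((graph_iff hq _).2 ⟨xt, hxt, rfl⟩))

/-- The lower bound is the negative of a minimum of linear functionals on `A`. -/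
lemma lbkF_eq {K T : ℕ} (p : Fin T → Fin K → ℝ) {pt : Fin K → ℝ} (hpt : ∀ i, 0 < pt i)
    (k : Fin K) :
    ∃ (F : Finset ((Fin T → Fin K → ℝ) × ℝ →ₗ[ℝ] ℝ)) (hF : F.Nonempty),
      ∀ q ∈ Aset p, lbkF p pt k q = -(F.inf' hF fun f => f q) := by
  have hneg := (isPolyCone_graph p pt k).comp
    (LinearMap.prodMap (LinearMap.id : ((Fin T → Fin K → ℝ) × ℝ) →ₗ[ℝ] _)
      (-LinearMap.id : ℝ →ₗ[ℝ] ℝ))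
  have hA : ∀ q ∈ Aset p, ∃ z, DemandGraph p pt k (q, -z) := by
    intro q hq
    obtain ⟨z, hz⟩ := exists_graph hpt k hq
    exact ⟨-z, by rwa [neg_neg]⟩
  rcases hneg.isGreatest with h | ⟨F, hF, h⟩
  · -- Demands are nonnegative, so the reflected fibres are bounded above and `A` would be empty.
    refine ⟨{0}, Finset.singleton_nonempty 0, fun q hq => ?_⟩
    obtain ⟨z, hz⟩ := hA q hq
    obtain ⟨-, -, xt, hxt, hk⟩ := h q z (max z 1) hz (le_max_left _ _)
    have h1 := hxt.1 k
    rw [hk] at h1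
    change 0 ≤ -(max z 1) at h1
    have := le_max_right z 1
    linarith
  · refine ⟨F, hF, fun q hq => ?_⟩
    obtain ⟨hmem, hub⟩ := h q (hA q hq)
    refine IsLeast.csInf_eq ⟨?_, ?_⟩
    · exact (graph_iff hq _).1 hmem
    · rintro _ ⟨xt, hxt, rfl⟩
      have h1 : DemandGraph p pt k (q, -(-(xt k))) := by
        rw [neg_neg]
        exact (graph_iff hq _).2 ⟨xt, hxt, rfl⟩
      have : -(xt k) ≤ F.inf' hF fun f => f q := hub h1
      simp only
      linarith

/-- On the region `A`, the upper counterfactual bound `x̄_k` is concave in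
`(d,ε)` and continuous (within `A`) at every point where it is finite, and the lower
bound `x̲_k` is convex and continuous in `(d,ε)` on `A`. -/
theorem counterfactual_bounds_shape_in_data {K T : ℕ}
    (p : Fin T → Fin K → ℝ) (hp : ∀ t i, 0 < p t i)
    (pt : Fin K → ℝ) (hpt : ∀ i, 0 < pt i) (k : Fin K) :
    (∀ q0 q1 : (Fin T → Fin K → ℝ) × ℝ, q0 ∈ Aset p → q1 ∈ Aset p →
      ∀ a b : ℝ, 0 ≤ a → 0 ≤ b → a + b = 1 →
        (a : EReal) * ubkF p pt k q0 + (b : EReal) * ubkF p pt k q1 ≤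
          ubkF p pt k (a • q0 + b • q1)) ∧
    (∀ q ∈ Aset p, ubkF p pt k q ≠ ⊤ →
      ContinuousWithinAt (ubkF p pt k) (Aset p) q) ∧
    ConvexOn ℝ (Aset p) (lbkF p pt k) ∧
    ContinuousOn (lbkF p pt k) (Aset p) := by
  refine ⟨?_, ?_, ?_, ?_⟩
  · intro q0 q1 h0 h1 a b ha hb hab
    have h2 := convex_Aset p h0 h1 ha hb hab
    rcases ubkF_cases p hpt k with h | ⟨F, hF, h⟩
    · rw [h _ h2]
      exact le_top
    · rw [h _ h0, h _ h1, h _ h2]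
      exact_mod_cast concave_inf'_linear F hF q0 q1 ha hb
  · intro q hq hfin
    rcases ubkF_cases p hpt k with h | ⟨F, hF, h⟩
    · exact absurd (h q hq) hfin
    · exact ((continuous_coe_real_ereal.comp
        (continuous_inf'_linear F hF)).continuousWithinAt).congr h (h q hq)
  · obtain ⟨F, hF, h⟩ := lbkF_eq p hpt k
    refine ⟨convex_Aset p, fun q0 h0 q1 h1 a b ha hb hab => ?_⟩
    rw [h _ h0, h _ h1, h _ (convex_Aset p h0 h1 ha hb hab), smul_eq_mul, smul_eq_mul]
    linarith [concave_inf'_linear F hF q0 q1 ha hb]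
  · obtain ⟨F, hF, h⟩ := lbkF_eq p hpt k
    exact (continuous_inf'_linear F hF).neg.continuousOn.congr h
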